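/- arXiv:2509.02162 — 2 statements merged into one kernel-verified Lean document; each statement's English description precedes it below -/
import Mathlib

section
/- Every finite composition φ_m ∘ ⋯ ∘ φ_1 of functions on ℝ, where each φ_i is of the form t ↦ |t − c_i| + c_i or of the form t ↦ c_i − |t − c_i| for some c_i ∈ ℝ (these are the contractions associated with polarizations with respect to hyperplanes parallel to a fixed hyperplane H, with either orientation), belongs to the class ℐ. -/
/-! The class `ℐ` contains every isometry of `ℝ` and the absolute value, and it is closed under
composition. For the latter, suppose `ψ ∘ φ` maps `(a, b)` strictly between its endpoint values.
Then `φ` never takes the values `φ a`, `φ b` inside `(a, b)`, so by the intermediate value theorem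
it maps `(a, b)` onto the open interval between them; hence the defining property applies to `φ` on
`(a, b)` and to `ψ` on the interval with endpoints `φ a`, `φ b`. A polarization is the absolute
value preceded and followed by an isometry. -/

open Filter Topology

noncomputable section

/-- The class `ℐ` of contractions `φ : ℝ → ℝ` such that whenever `a < b` and `φ(s)` lies in
the open interval with endpoints `φ(a)` and `φ(b)` for every `s ∈ (a,b)`, then
`|φ(b) − φ(a)| = b − a` (equivalently, `φ` is affine with slope `±1` on `(a,b)`). -/
def memI (φ : ℝ → ℝ) : Prop :=
  LipschitzWith 1 φ ∧ ∀ a b : ℝ, a < b →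
    (∀ s ∈ Set.Ioo a b, φ s ∈ Set.Ioo (min (φ a) (φ b)) (max (φ a) (φ b))) →
    |φ b - φ a| = b - a

section

open Set

theorem mem_uIoo_or_mem_uIoo_or_mem_uIoo {δ : Type*} [LinearOrder δ] {x y z : δ}
    (hxy : x ≠ y) (hyz : y ≠ z) (hxz : x ≠ z) :
    x ∈ uIoo y z ∨ y ∈ uIoo x z ∨ z ∈ uIoo x y := by
  simp only [uIoo, mem_Ioo, inf_lt_iff, lt_sup_iff]
  grind

section IntermediateValue

variable {α δ : Type*} [ConditionallyCompleteLinearOrder α] [TopologicalSpace α]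
  [OrderTopology α] [DenselyOrdered α] [LinearOrder δ] [TopologicalSpace δ]
  [OrderClosedTopology δ] {f : α → δ} {a b : α}

theorem uIoo_subset_image_Ioo (hab : a ≤ b) (hf : ContinuousOn f (Icc a b)) :
    uIoo (f a) (f b) ⊆ f '' Ioo a b := by
  rcases le_total (f a) (f b) with h | h
  · rw [uIoo_of_le h]
    exact intermediate_value_Ioo hab hf
  · rw [uIoo_of_ge h]
    exact intermediate_value_Ioo' hab hf

theorem mapsTo_Ioo_uIoo_of_ne (hf : ContinuousOn f (Icc a b)) (hab : f a ≠ f b)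
    (ha : ∀ s ∈ Ioo a b, f s ≠ f a) (hb : ∀ s ∈ Ioo a b, f s ≠ f b) :
    MapsTo f (Ioo a b) (uIoo (f a) (f b)) := by
  intro s hs
  rcases mem_uIoo_or_mem_uIoo_or_mem_uIoo (ha s hs) hab (hb s hs) with h | h | h
  · exact h
  · obtain ⟨z, hz, hza⟩ :=
      uIoo_subset_image_Ioo hs.2.le (hf.mono (Icc_subset_Icc_left hs.1.le)) h
    exact absurd hza (ha z ⟨hs.1.trans hz.1, hz.2⟩)
  · rw [uIoo_comm] at h
    obtain ⟨z, hz, hzb⟩ :=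
      uIoo_subset_image_Ioo hs.1.le (hf.mono (Icc_subset_Icc_right hs.2.le)) h
    exact absurd hzb (hb z ⟨hz.1, hz.2.trans hs.2⟩)

end IntermediateValue

theorem memI.abs_sub_eq_of_mapsTo {φ : ℝ → ℝ} (hφ : memI φ) {a b : ℝ}
    (h : MapsTo φ (uIoo a b) (uIoo (φ a) (φ b))) : |φ b - φ a| = |b - a| := by
  rcases lt_trichotomy a b with hab | rfl | hba
  · rw [uIoo_of_lt hab] at h
    rw [hφ.2 a b hab h, abs_of_pos (sub_pos.2 hab)]
  · simp only [sub_self]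
  · rw [uIoo_of_gt hba, uIoo_comm] at h
    rw [abs_sub_comm, hφ.2 b a hba h, abs_sub_comm, abs_of_pos (sub_pos.2 hba)]

theorem memI.comp {ψ φ : ℝ → ℝ} (hψ : memI ψ) (hφ : memI φ) : memI (ψ ∘ φ) := by
  refine ⟨by simpa only [mul_one] using hψ.1.comp hφ.1, fun a b hab h => ?_⟩
  change MapsTo (ψ ∘ φ) (Ioo a b) (uIoo (ψ (φ a)) (ψ (φ b))) at h
  have hφ_cont : ContinuousOn φ (Icc a b) := hφ.1.continuous.continuousOn
  have ne_left : ∀ s ∈ Ioo a b, φ s ≠ φ a := fun s hs hsa =>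
    left_notMem_uIoo (hsa ▸ h hs)
  have ne_right : ∀ s ∈ Ioo a b, φ s ≠ φ b := fun s hs hsb =>
    right_notMem_uIoo (hsb ▸ h hs)
  have ne_endpoints : φ a ≠ φ b := fun hφab => by
    obtain ⟨s, hs⟩ := exists_between hab
    simpa [hφab] using h hs
  have hφ_maps := mapsTo_Ioo_uIoo_of_ne hφ_cont ne_endpoints ne_left ne_right
  have hψ_maps : MapsTo ψ (uIoo (φ a) (φ b)) (uIoo (ψ (φ a)) (ψ (φ b))) :=
    (mapsTo_image_iff.2 h).mono_left (uIoo_subset_image_Ioo hab.le hφ_cont)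
  calc |ψ (φ b) - ψ (φ a)| = |φ b - φ a| := hψ.abs_sub_eq_of_mapsTo hψ_maps
    _ = b - a := hφ.2 a b hab hφ_maps

theorem memI_of_isometry {φ : ℝ → ℝ} (hφ : Isometry φ) : memI φ := by
  refine ⟨hφ.lipschitz, fun a b hab _ => ?_⟩
  rw [← Real.dist_eq, hφ.dist_eq, Real.dist_eq, abs_of_pos (sub_pos.2 hab)]

theorem memI_abs : memI (fun t : ℝ => |t|) := by
  refine ⟨lipschitzWith_one_norm, fun a b hab h => ?_⟩
  have zero_notMem : (0 : ℝ) ∉ Ioo a b := fun h0 => by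
    have hmin : min |a| |b| < |0| := (h 0 h0).1
    rw [abs_zero] at hmin
    exact hmin.not_ge (le_min (abs_nonneg a) (abs_nonneg b))
  beta_reduce
  rcases le_or_gt 0 a with ha | ha
  · rw [abs_of_nonneg ha, abs_of_nonneg (ha.trans hab.le), abs_of_pos (sub_pos.2 hab)]
  · have hb : b ≤ 0 := not_lt.1 fun hb_pos => zero_notMem ⟨ha, hb_pos⟩
    rw [abs_of_neg ha, abs_of_nonpos hb, neg_sub_neg, abs_sub_comm, abs_of_pos (sub_pos.2 hab)]

theorem memI_abs_sub_add (c : ℝ) : memI (fun t => |t - c| + c) :=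
  (memI_of_isometry (IsometryEquiv.addRight c).isometry).comp
    (memI_abs.comp (memI_of_isometry (IsometryEquiv.subRight c).isometry))

theorem memI_sub_abs_sub (c : ℝ) : memI (fun t => c - |t - c|) :=
  (memI_of_isometry (IsometryEquiv.subLeft c).isometry).comp
    (memI_abs.comp (memI_of_isometry (IsometryEquiv.subRight c).isometry))

end

theorem stmt6_general (l : List (ℝ → ℝ)) (hl : ∀ f ∈ l, memI f) :
    memI (l.foldr (· ∘ ·) id) :=
  List.foldrRecOn l _ (memI_of_isometry isometry_id) fun _ hφ f hf => (hl f hf).comp hφ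

/-- Corollary 6.6: every finite composition of the one-dimensional contractions associated
with polarizations with respect to hyperplanes parallel to a fixed hyperplane (namely the
maps `t ↦ |t − c| + c` and `t ↦ c − |t − c|`) belongs to the class `ℐ`. -/
theorem stmt6 (l : List (ℝ → ℝ))
    (hl : ∀ f ∈ l, (∃ c : ℝ, f = fun t => |t - c| + c) ∨
                   (∃ c : ℝ, f = fun t => c - |t - c|)) :
    memI (l.foldr (· ∘ ·) id) := by
  refine stmt6_general l fun f hf => ?_
  rcases hl f hf with ⟨c, rfl⟩ | ⟨c, rfl⟩
  exacts [memI_abs_sub_add c, memI_sub_abs_sub c]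
end
end

section
/- Let n ≥ 2, let H = u⊥ + t₀u (u a unit vector, t₀ ∈ ℝ) be a hyperplane in ℝⁿ, and let ∂_k ∈ 𝒥_H(𝒦ⁿₙ) for k = 0, 1, 2, …, with associated contractions φ_{∂_k} : ℝ → ℝ satisfying ∂_k B(x + tu, r) = B(x + φ_{∂_k}(t)u, r) essentially for x ∈ u⊥, t ∈ ℝ, r > 0. (i) If ∂_k → ∂_0 (i.e., ‖1_{∂_k K} − 1_{∂_0 K}‖_{L¹} → 0 for every K ∈ 𝒦ⁿₙ), then φ_{∂_k} → φ_{∂_0} pointwise. (ii) If φ_{∂_k} → φ pointwise as k → ∞ (k ≥ 1), then there is an essentially unique map ∂ ∈ 𝒥_H(𝒦ⁿₙ) whose associated contraction is φ and such that ∂_k → ∂. -/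
open MeasureTheory Metric Filter Topology
open scoped RealInnerProductSpace

noncomputable section

abbrev Euc (n : ℕ) : Type := EuclideanSpace ℝ (Fin n)

/-- `A` is essentially contained in `B` (up to a set of measure zero). -/
def essSub {n : ℕ} (A B : Set (Euc n)) : Prop := volume (A \ B) = 0

/-- `A` is essentially equal to `B` (up to a set of measure zero). -/
def essEq {n : ℕ} (A B : Set (Euc n)) : Prop := volume ((A \ B) ∪ (B \ A)) = 0

/-- The symmetric difference of two sets. -/
def sd {n : ℕ} (A B : Set (Euc n)) : Set (Euc n) := (A \ B) ∪ (B \ A)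

/-- A convex body: a compact convex set with nonempty interior. -/
def isConvexBody {n : ℕ} (A : Set (Euc n)) : Prop :=
  IsCompact A ∧ Convex ℝ A ∧ (interior A).Nonempty

/-- The infinite spherical cylinder of radius `ρ` whose axis passes through `c`
in direction `u`. -/
def cyl {n : ℕ} (u c : Euc n) (ρ : ℝ) : Set (Euc n) :=
  {y | ‖(y - c) - ⟪y - c, u⟫ • u‖ ≤ ρ}

/-- Membership in `𝒥_H(𝒦ⁿₙ)`: a map on convex bodies, with values in `𝓛ⁿ`, that is
monotonic, measure preserving, maps balls to balls, and respects `H`-cylinders,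
where `H` is a hyperplane with unit normal `u`. -/
def inJH {n : ℕ} (u : Euc n) (D : Set (Euc n) → Set (Euc n)) : Prop :=
  (∀ A : Set (Euc n), isConvexBody A → MeasurableSet (D A) ∧ volume (D A) ≠ ⊤) ∧
  (∀ A B : Set (Euc n), isConvexBody A → isConvexBody B →
      essSub A B → essSub (D A) (D B)) ∧
  (∀ A : Set (Euc n), isConvexBody A → volume (D A) = volume A) ∧
  (∀ A : Set (Euc n), isConvexBody A →
      (∃ (x : Euc n) (r : ℝ), 0 < r ∧ essEq A (closedBall x r)) →
      ∃ (x' : Euc n) (r' : ℝ), 0 < r' ∧ essEq (D A) (closedBall x' r')) ∧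
  (∀ A : Set (Euc n), isConvexBody A → ∀ (c : Euc n) (ρ : ℝ), 0 < ρ →
      essSub A (cyl u c ρ) → essSub (D A) (cyl u c ρ))

/-- `φ` is the contraction associated with `D` (with respect to the direction `u`):
`∂B(x + tu, r) = B(x + φ(t)u, r)`, essentially. -/
def assocContr {n : ℕ} (u : Euc n) (D : Set (Euc n) → Set (Euc n)) (φ : ℝ → ℝ) : Prop :=
  LipschitzWith 1 φ ∧ ∀ x : Euc n, ⟪x, u⟫ = 0 → ∀ t r : ℝ, 0 < r →
    essEq (D (closedBall (x + t • u) r)) (closedBall (x + φ t • u) r)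

/-- Convergence `∂_k → ∂` on the convex bodies, in the `L¹` sense of indicator functions. -/
def convOnK {n : ℕ} (Dk : ℕ → Set (Euc n) → Set (Euc n))
    (D : Set (Euc n) → Set (Euc n)) : Prop :=
  ∀ K : Set (Euc n), isConvexBody K →
    Tendsto (fun k => volume (sd (Dk k K) (D K))) atTop (𝓝 0)

/-! A map `D` in `𝒥_H` with contraction `φ` is determined by its values on lenses, the
intersections of a ball with a thin cylinder about a line `p + ℝ u` through its centre
`p + m • u`. Monotonicity puts the image of a lens inside the moved ball and inside the same
cylinder, hence inside the lens about `p + φ m • u`, and preservation of volume turns this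
inclusion into an equality. So `D K` contains the union `shiftChords u φ K` of all lenses
moved in this way from within `K`. Along each line parallel to `u` this union contains the
chord of `K` moved to its new position, so by Cavalieri's principle its volume is at least
that of `K`, and `D K` is essentially `shiftChords u φ K`.

If `φ_k → φ` pointwise, a point of the open set `shiftChords u φ K` eventually belongs to
`shiftChords u (φ_k) K`. By Fatou's lemma `shiftChords u φ K` then has volume at most, hence
exactly, that of `K`, and equality of the volumes upgrades eventual membership to convergence in
`L¹`. The defining properties of `𝒥_H` pass to `L¹` limits. Conversely, `L¹` convergence on unit
balls is convergence of their centres. -/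

open scoped symmDiff

section MeasureConvergence

variable {α ι : Type*} [MeasurableSpace α] {μ : Measure α} {l : Filter ι}
  {A B : Set α} {As Bs : ι → Set α}

lemma ae_le_of_tendsto_measure_symmDiff [l.NeBot]
    (hA : Tendsto (fun i => μ (As i ∆ A)) l (𝓝 0)) (hB : Tendsto (fun i => μ (Bs i ∆ B)) l (𝓝 0))
    (hle : ∀ i, As i ≤ᵐ[μ] Bs i) : A ≤ᵐ[μ] B := by
  have hbound (i : ι) : μ (A \ B) ≤ μ (As i ∆ A) + μ (Bs i ∆ B) := by
    calc μ (A \ B) ≤ μ ((As i ∆ A ∪ Bs i ∆ B) ∪ As i \ Bs i) := by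
          refine measure_mono fun x hx => ?_
          simp only [Set.mem_union, Set.mem_symmDiff, Set.mem_sdiff] at hx ⊢
          tauto
      _ ≤ μ (As i ∆ A ∪ Bs i ∆ B) + μ (As i \ Bs i) := measure_union_le _ _
      _ = μ (As i ∆ A ∪ Bs i ∆ B) := by rw [ae_le_set.1 (hle i), add_zero]
      _ ≤ μ (As i ∆ A) + μ (Bs i ∆ B) := measure_union_le _ _
  have hlim := hA.add hB
  rw [add_zero] at hlim
  exact ae_le_set.2 (le_antisymm (ge_of_tendsto' hlim hbound) zero_le)

variable [l.IsCountablyGenerated]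

lemma measure_le_of_forall_eventually_mem [l.NeBot] {c : ENNReal} (hA : MeasurableSet A)
    (hAs : ∀ i, MeasurableSet (As i)) (hc : ∀ i, μ (As i) ≤ c)
    (hmem : ∀ x ∈ A, ∀ᶠ i in l, x ∈ As i) : μ A ≤ c := by
  calc μ A = ∫⁻ x, A.indicator 1 x ∂μ := (lintegral_indicator_one hA).symm
    _ ≤ ∫⁻ x, liminf (fun i => (As i).indicator 1 x) l ∂μ := by
        refine lintegral_mono fun x => ?_
        by_cases hx : x ∈ A
        · refine le_liminf_of_le (by isBoundedDefault) ?_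
          filter_upwards [hmem x hx] with i hi
          simp [hx, hi]
        · simp [hx]
    _ ≤ liminf (fun i => ∫⁻ x, (As i).indicator 1 x ∂μ) l :=
        lintegral_liminf_le fun i => measurable_one.indicator (hAs i)
    _ ≤ c := by
        simp only [lintegral_indicator_one (hAs _)]
        exact (liminf_le_limsup).trans (limsup_le_of_le (by isBoundedDefault) (.of_forall hc))

lemma tendsto_measure_symmDiff_of_forall_eventually_mem (hA : MeasurableSet A)
    (hAs : ∀ i, MeasurableSet (As i)) (hfin : μ A ≠ ⊤) (hle : ∀ i, μ (As i) ≤ μ A)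
    (hmem : ∀ x ∈ A, ∀ᶠ i in l, x ∈ As i) : Tendsto (fun i => μ (As i ∆ A)) l (𝓝 0) := by
  have hlost : Tendsto (fun i => μ (A \ As i)) l (𝓝 0) := by
    rw [← measure_empty (μ := μ)]
    refine tendsto_measure_of_tendsto_indicator l (fun i => hA.diff (hAs i)) hA hfin
      (.of_forall fun i => Set.sdiff_subset) fun x => ?_
    by_cases hx : x ∈ A
    · filter_upwards [hmem x hx] with i hi using by simp [hi]
    · simp [hx]
  have hgain (i : ι) : μ (As i \ A) ≤ μ (A \ As i) := by
    refine ENNReal.le_of_add_le_add_left (a := μ (A ∩ As i))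
      (measure_ne_top_of_subset Set.inter_subset_left hfin) ?_
    calc μ (A ∩ As i) + μ (As i \ A) = μ (As i) := by
          rw [Set.inter_comm, measure_inter_add_sdiff _ hA]
      _ ≤ μ A := hle i
      _ = μ (A ∩ As i) + μ (A \ As i) := (measure_inter_add_sdiff _ (hAs i)).symm
  refine tendsto_of_tendsto_of_tendsto_of_le_of_le tendsto_const_nhds
    (by simpa using hlost.add hlost) (fun _ => zero_le) fun i => ?_
  exact (measure_union_le _ _).trans (add_le_add_left (hgain i) _)

end MeasureConvergence

section Cavalieri

lemma volume_setOf_map_sub_smul_mem_Ico {E : Type*} [AddCommGroup E] [Module ℝ E] {f : E →ₗ[ℝ] ℝ}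
    {u : E} (hf : f u = 1) (y : E) : volume {s : ℝ | f (y - s • u) ∈ Set.Ico 0 1} = 1 := by
  have : {s : ℝ | f (y - s • u) ∈ Set.Ico 0 1} = Set.Ioc (f y - 1) (f y) := by
    ext s
    simp only [map_sub, map_smul, hf, smul_eq_mul, mul_one, Set.mem_ofPred_eq, Set.mem_Ico,
      Set.mem_Ioc]
    grind
  rw [this, Real.volume_Ioc]
  simp

variable {E : Type*} [NormedAddCommGroup E] [NormedSpace ℝ E] [MeasurableSpace E] [BorelSpace E]
  [SecondCountableTopology E] {μ : Measure E} [SFinite μ] [μ.IsAddRightInvariant]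
  {f : E →L[ℝ] ℝ} {u : E} {A B : Set E}

lemma measure_eq_setLIntegral_line (hf : f u = 1) (hA : MeasurableSet A) :
    μ A = ∫⁻ y in f ⁻¹' Set.Ico 0 1, volume {s : ℝ | y + s • u ∈ A} ∂μ := by
  have hS : MeasurableSet (f ⁻¹' Set.Ico 0 1) := f.continuous.measurable measurableSet_Ico
  set a : E → ENNReal := A.indicator 1 with ha
  set w : E → ENNReal := (f ⁻¹' Set.Ico 0 1).indicator 1 with hw
  have ham : Measurable a := measurable_one.indicator hA
  have hwm : Measurable w := measurable_one.indicator hS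
  have hwline (y : E) : ∫⁻ s : ℝ, w (y - s • u) = 1 := by
    have hslab : MeasurableSet {s : ℝ | f (y - s • u) ∈ Set.Ico 0 1} :=
      measurableSet_Ico.preimage (by fun_prop)
    rw [← volume_setOf_map_sub_smul_mem_Ico (f := f.toLinearMap) hf y]
    exact lintegral_indicator_one hslab
  calc μ A = ∫⁻ y, a y * (∫⁻ s : ℝ, w (y - s • u)) ∂μ := by
        simp only [hwline, mul_one, ha, lintegral_indicator_one hA]
    _ = ∫⁻ y, (∫⁻ s : ℝ, a y * w (y - s • u)) ∂μ :=
        lintegral_congr fun y => (lintegral_const_mul _ (by fun_prop)).symm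
    _ = ∫⁻ s : ℝ, ∫⁻ y, a y * w (y - s • u) ∂μ :=
        lintegral_lintegral_swap (Measurable.aemeasurable (by fun_prop))
    _ = ∫⁻ s : ℝ, ∫⁻ y, a (y + s • u) * w y ∂μ := by
        refine lintegral_congr fun s => ?_
        rw [← lintegral_add_right_eq_self (fun y => a y * w (y - s • u)) (s • u)]
        simp only [add_sub_cancel_right]
    _ = ∫⁻ y, (∫⁻ s : ℝ, a (y + s • u) * w y) ∂μ :=
        (lintegral_lintegral_swap (Measurable.aemeasurable (by fun_prop))).symm
    _ = ∫⁻ y, (f ⁻¹' Set.Ico 0 1).indicator (fun y => volume {s : ℝ | y + s • u ∈ A}) y ∂μ := by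
        refine lintegral_congr fun y => ?_
        have hline : Measurable fun s : ℝ => y + s • u := by fun_prop
        have hvol : ∫⁻ s : ℝ, a (y + s • u) = volume {s : ℝ | y + s • u ∈ A} :=
          lintegral_indicator_one (hline hA)
        rw [lintegral_mul_const _ (by fun_prop), hvol]
        by_cases hy : y ∈ f ⁻¹' Set.Ico 0 1 <;> simp [hw, hy]
    _ = ∫⁻ y in f ⁻¹' Set.Ico 0 1, volume {s : ℝ | y + s • u ∈ A} ∂μ := lintegral_indicator hS _

lemma measure_le_of_forall_volume_line_le (hf : f u = 1) (hA : MeasurableSet A)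
    (hB : MeasurableSet B)
    (h : ∀ p, f p = 0 → volume {s : ℝ | p + s • u ∈ A} ≤ volume {s : ℝ | p + s • u ∈ B}) :
    μ A ≤ μ B := by
  have hbase (C : Set E) (y : E) :
      volume {s : ℝ | (y - f y • u) + s • u ∈ C} = volume {s : ℝ | y + s • u ∈ C} := by
    rw [← measure_preimage_add_right volume (f y) {s : ℝ | (y - f y • u) + s • u ∈ C}]
    simp only [Set.preimage_ofPred_eq, add_smul, sub_add_add_cancel]
  rw [measure_eq_setLIntegral_line hf hA, measure_eq_setLIntegral_line hf hB]
  refine lintegral_mono fun y => ?_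
  simpa only [hbase] using h (y - f y • u) (by simp [hf])

end Cavalieri

lemma volume_le_of_forall_closedBall_subset {U W : Set ℝ} (hU : IsPreconnected U)
    (hb : Bornology.IsBounded U) (ψ : ℝ → ℝ)
    (h : ∀ m r, 0 < r → closedBall m r ⊆ U → ball (ψ m) r ⊆ W) : volume U ≤ volume W := by
  obtain rfl | hne := U.eq_empty_or_nonempty
  · simp
  set a := sInf U
  set b := sSup U
  have hUab : Set.Ioo a b ⊆ U :=
    IsConnected.Ioo_csInf_csSup_subset ⟨hne, hU⟩ hb.bddBelow hb.bddAbove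
  have hW : ball (ψ ((a + b) / 2)) ((b - a) / 2) ⊆ W := by
    intro y hy
    obtain ⟨r, hyr, hr⟩ := exists_between (mem_ball.1 hy)
    refine h _ r (dist_nonneg.trans_lt hyr) (fun s hs => hUab ?_) hyr
    rw [Real.closedBall_eq_Icc] at hs
    constructor <;> linarith [hs.1, hs.2]
  calc volume U ≤ volume (Set.Icc a b) :=
        measure_mono fun s hs => ⟨csInf_le hb.bddBelow hs, le_csSup hb.bddAbove hs⟩
    _ = volume (ball (ψ ((a + b) / 2)) ((b - a) / 2)) := by
        rw [Real.volume_Icc, Real.volume_ball]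
        ring_nf
    _ ≤ volume W := measure_mono hW

section Balls

variable {E : Type*} [NormedAddCommGroup E] [NormedSpace ℝ E]

lemma exists_closedBall_subset_sdiff {x y : E} {r ε : ℝ} (hε : 0 ≤ ε) (hεr : ε ≤ r)
    (hxy : 2 * ε < dist x y) : ∃ z, closedBall z ε ⊆ closedBall x r \ closedBall y r := by
  set d := dist x y
  have hd0 : 0 < d := by linarith
  have hnorm : ‖x - y‖ = d := (dist_eq_norm x y).symm
  have hzx : dist (x + ((r - ε) / d) • (x - y)) x = r - ε := by
    rw [dist_self_add_left, norm_smul, hnorm, Real.norm_of_nonneg (by bound),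
      div_mul_cancel₀ _ hd0.ne']
  have hzy : dist (x + ((r - ε) / d) • (x - y)) y = d + (r - ε) := by
    have : x + ((r - ε) / d) • (x - y) - y = (1 + (r - ε) / d) • (x - y) := by module
    rw [dist_eq_norm, this, norm_smul, hnorm, Real.norm_of_nonneg (by bound)]
    field_simp
  refine ⟨x + ((r - ε) / d) • (x - y), fun w hw => ⟨?_, fun hwy => ?_⟩⟩
  · exact closedBall_subset_closedBall' (by linarith) hw
  · have := dist_triangle_left (x + ((r - ε) / d) • (x - y)) y w
    linarith [mem_closedBall.1 hw, mem_closedBall.1 hwy]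

variable [MeasurableSpace E] [BorelSpace E] {μ : Measure E} [μ.IsAddHaarMeasure]
  {ι : Type*} {l : Filter ι} {x : ι → E} {y : E} {r : ℝ}

lemma tendsto_of_tendsto_measure_symmDiff_closedBall (hr : 0 < r)
    (h : Tendsto (fun i => μ (closedBall (x i) r ∆ closedBall y r)) l (𝓝 0)) :
    Tendsto x l (𝓝 y) := by
  refine Metric.tendsto_nhds.2 fun δ hδ => ?_
  obtain ⟨ε, hε, hεmin⟩ := exists_between (show 0 < min r (δ / 2) by positivity)
  have hεr : ε ≤ r := (hεmin.trans_le (min_le_left _ _)).le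
  have hεδ : ε < δ / 2 := hεmin.trans_le (min_le_right _ _)
  filter_upwards [h.eventually_lt_const (measure_closedBall_pos μ (0 : E) hε)] with i hi
  by_contra! hdist
  have hfar : 2 * ε < dist (x i) y := by linarith
  obtain ⟨z, hz⟩ := exists_closedBall_subset_sdiff hε.le hεr hfar
  refine hi.not_ge ?_
  rw [Measure.addHaar_closedBall_center μ 0, ← Measure.addHaar_closedBall_center μ z]
  exact measure_mono (hz.trans Set.subset_union_left)

lemma tendsto_measure_symmDiff_closedBall [FiniteDimensional ℝ E] [l.IsCountablyGenerated]
    (hr : r ≠ 0) (h : Tendsto x l (𝓝 y)) :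
    Tendsto (fun i => μ (closedBall (x i) r ∆ closedBall y r)) l (𝓝 0) := by
  have hball : ball y r =ᵐ[μ] closedBall y r := by
    rw [← interior_closedBall y hr]
    exact interior_ae_eq_of_null_frontier ((convex_closedBall y r).addHaar_frontier μ)
  simp only [← measure_congr ((ae_eq_refl _).symmDiff hball)]
  refine tendsto_measure_symmDiff_of_forall_eventually_mem measurableSet_ball
    (fun i => measurableSet_closedBall) measure_ball_lt_top.ne (fun i => ?_) fun z hz => ?_
  · rw [measure_congr hball, Measure.addHaar_closedBall_center,
      Measure.addHaar_closedBall_center μ y]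
  · filter_upwards [(tendsto_const_nhds.dist h).eventually_lt_const (mem_ball.1 hz)] with i hi
      using hi.le

end Balls

lemma isometry_add_smul {E : Type*} [NormedAddCommGroup E] [NormedSpace ℝ E] {u : E}
    (hu : ‖u‖ = 1) (p : E) : Isometry fun s : ℝ => p + s • u :=
  Isometry.of_dist_eq fun s t => by
    rw [dist_add_left, dist_eq_norm, ← sub_smul, norm_smul, hu, mul_one, Real.dist_eq,
      Real.norm_eq_abs]

lemma exists_eq_add_smul {E : Type*} [NormedAddCommGroup E] [InnerProductSpace ℝ E] {u : E}
    (hu : ‖u‖ = 1) (x : E) : ∃ (p : E) (t : ℝ), ⟪p, u⟫ = 0 ∧ x = p + t • u :=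
  ⟨x - ⟪x, u⟫ • u, ⟪x, u⟫,
    by simp [inner_sub_left, real_inner_smul_left, hu], by simp⟩

section EuclideanSpace

variable {n : ℕ} {u : Euc n}

section EssentialRelations

variable {A B : Set (Euc n)}

lemma essSub_iff_ae_le : essSub A B ↔ A ≤ᵐ[volume] B := ae_le_set.symm

lemma essEq_iff_ae_eq : essEq A B ↔ A =ᵐ[volume] B := measure_symmDiff_eq_zero_iff

end EssentialRelations

section Cylinders

lemma cyl_eq_preimage (hu : ‖u‖ = 1) (c : Euc n) (ρ : ℝ) :
    cyl u c ρ = (ℝ ∙ u)ᗮ.starProjection ⁻¹' closedBall ((ℝ ∙ u)ᗮ.starProjection c) ρ := by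
  ext y
  rw [Set.mem_preimage, mem_closedBall, dist_eq_norm, ← map_sub,
    Submodule.starProjection_orthogonal_val, Submodule.starProjection_unit_singleton ℝ hu,
    real_inner_comm]
  rfl

lemma isClosed_cyl (hu : ‖u‖ = 1) (c : Euc n) (ρ : ℝ) : IsClosed (cyl u c ρ) := by
  rw [cyl_eq_preimage hu]
  exact isClosed_closedBall.preimage (ContinuousLinearMap.continuous _)

lemma convex_cyl (hu : ‖u‖ = 1) (c : Euc n) (ρ : ℝ) : Convex ℝ (cyl u c ρ) := by
  rw [cyl_eq_preimage hu]
  exact (convex_closedBall _ ρ).linear_preimage (ContinuousLinearMap.toLinearMap _)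

lemma add_smul_mem_cyl (hu : ‖u‖ = 1) {c y : Euc n} {ρ : ℝ} (s : ℝ) :
    y + s • u ∈ cyl u c ρ ↔ y ∈ cyl u c ρ := by
  rw [cyl_eq_preimage hu, Set.mem_preimage, map_add, map_smul,
    Submodule.starProjection_orthogonalComplement_singleton_eq_zero, smul_zero, add_zero,
    Set.mem_preimage]

lemma add_smul_mem_interior_cyl (hu : ‖u‖ = 1) (p : Euc n) (s : ℝ) {ρ : ℝ} (hρ : 0 < ρ) :
    p + s • u ∈ interior (cyl u p ρ) := by
  rw [cyl_eq_preimage hu, mem_interior_iff_mem_nhds]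
  refine (ContinuousLinearMap.continuous _).continuousAt.preimage_mem_nhds ?_
  rw [map_add, map_smul, Submodule.starProjection_orthogonalComplement_singleton_eq_zero, smul_zero,
    add_zero]
  exact closedBall_mem_nhds _ hρ

end Cylinders

section Lenses

/-- The part of the closed ball of radius `r` about `p + m • u` within distance `ρ` of the line
`p + ℝ u`. Lenses are the bodies with which chords parallel to `u` are tested: `m` is the midpoint
of the chord, `r` its half-length and `ρ` a thickness that may be taken small. -/
def lens (u p : Euc n) (m r ρ : ℝ) : Set (Euc n) := closedBall (p + m • u) r ∩ cyl u p ρ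

variable {p : Euc n} {m r ρ : ℝ}

lemma interior_lens (hr : r ≠ 0) :
    interior (lens u p m r ρ) = ball (p + m • u) r ∩ interior (cyl u p ρ) := by
  rw [lens, interior_inter, interior_closedBall _ hr]

lemma add_smul_mem_interior_lens (hu : ‖u‖ = 1) (hρ : 0 < ρ) {s : ℝ} (hs : s ∈ ball m r) :
    p + s • u ∈ interior (lens u p m r ρ) := by
  rw [interior_lens (pos_of_mem_ball hs).ne']
  refine ⟨?_, add_smul_mem_interior_cyl hu p s hρ⟩
  rwa [mem_ball, (isometry_add_smul hu p).dist_eq]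

lemma isConvexBody_lens (hu : ‖u‖ = 1) (hr : 0 < r) (hρ : 0 < ρ) :
    isConvexBody (lens u p m r ρ) :=
  ⟨(isCompact_closedBall _ _).inter_right (isClosed_cyl hu p ρ),
    (convex_closedBall _ _).inter (convex_cyl hu p ρ),
    _, add_smul_mem_interior_lens hu hρ (mem_ball_self hr)⟩

lemma volume_lens_eq (hu : ‖u‖ = 1) (p : Euc n) (m m' r ρ : ℝ) :
    volume (lens u p m r ρ) = volume (lens u p m' r ρ) := by
  rw [← measure_preimage_add_right volume ((m' - m) • u) (lens u p m' r ρ)]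
  congr 1
  ext y
  have hdist : dist (y + (m' - m) • u) (p + m' • u) = dist y (p + m • u) := by
    rw [dist_eq_norm, dist_eq_norm]
    congr 1
    module
  simp only [lens, Set.mem_preimage, Set.mem_inter_iff, mem_closedBall, add_smul_mem_cyl hu, hdist]

lemma exists_lens_subset (hu : ‖u‖ = 1) {U : Set (Euc n)} (hU : IsOpen U)
    (hchord : ∀ s ∈ closedBall m r, p + s • u ∈ U) : ∃ ρ > 0, lens u p m r ρ ⊆ U := by
  have hcomp : IsCompact ((fun s : ℝ => p + s • u) '' closedBall m r) :=
    (isCompact_closedBall m r).image (by fun_prop)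
  obtain ⟨ρ, hρ, hthick⟩ := hcomp.exists_cthickening_subset_open hU (Set.image_subset_iff.2 hchord)
  refine ⟨ρ, hρ, fun z ⟨hball, hcyl⟩ => hthick ?_⟩
  have hheight : ⟪z - p, u⟫ ∈ closedBall m r := by
    have hinner : ⟪z - p, u⟫ - m = ⟪z - (p + m • u), u⟫ := by
      rw [← sub_sub, inner_sub_left (z - p), real_inner_smul_left, real_inner_self_eq_norm_sq, hu]
      ring
    rw [mem_closedBall, Real.dist_eq, hinner]
    calc |⟪z - (p + m • u), u⟫| ≤ ‖z - (p + m • u)‖ * ‖u‖ := abs_real_inner_le_norm _ _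
      _ ≤ r := by rw [hu, mul_one, ← dist_eq_norm]; exact hball
  refine mem_cthickening_of_dist_le z _ ρ _ (Set.mem_image_of_mem _ hheight) ?_
  rw [dist_eq_norm, ← sub_sub]
  exact hcyl

end Lenses

lemma isConvexBody_closedBall (x : Euc n) {r : ℝ} (hr : 0 < r) : isConvexBody (closedBall x r) :=
  ⟨isCompact_closedBall x r, convex_closedBall x r, x,
    ball_subset_interior_closedBall (mem_ball_self hr)⟩

section ShiftChords

variable {φ : ℝ → ℝ} {K : Set (Euc n)}

/-- The set obtained from `K` by moving each chord of `K` parallel to `u` along itself, so that the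
height of its midpoint changes from `m` to `φ m`. It is encoded as a union of moved open lenses,
which makes it open by construction; it is the canonical representative of the value at `K` of the
map with associated contraction `φ`. -/
def shiftChords (u : Euc n) (φ : ℝ → ℝ) (K : Set (Euc n)) : Set (Euc n) :=
  {y | ∃ (p : Euc n) (m r ρ : ℝ), ⟪p, u⟫ = 0 ∧ 0 < r ∧ 0 < ρ ∧ lens u p m r ρ ⊆ K ∧
    y ∈ interior (lens u p (φ m) r ρ)}

lemma isOpen_shiftChords : IsOpen (shiftChords u φ K) := by
  refine isOpen_iff_mem_nhds.2 fun y ⟨p, m, r, ρ, hp, hr, hρ, hsub, hy⟩ => ?_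
  filter_upwards [isOpen_interior.mem_nhds hy] with z hz using ⟨p, m, r, ρ, hp, hr, hρ, hsub, hz⟩

lemma eventually_mem_shiftChords {ι : Type*} {l : Filter ι} {φs : ι → ℝ → ℝ}
    (hφ : ∀ t, Tendsto (fun i => φs i t) l (𝓝 (φ t))) {y : Euc n} (hy : y ∈ shiftChords u φ K) :
    ∀ᶠ i in l, y ∈ shiftChords u (φs i) K := by
  obtain ⟨p, m, r, ρ, hp, hr, hρ, hsub, hy⟩ := hy
  rw [interior_lens hr.ne'] at hy
  have hcentre : Tendsto (fun i => p + φs i m • u) l (𝓝 (p + φ m • u)) :=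
    ((hφ m).smul_const u).const_add p
  filter_upwards [(tendsto_const_nhds.dist hcentre).eventually_lt_const (mem_ball.1 hy.1)] with i hi
  refine ⟨p, m, r, ρ, hp, hr, hρ, hsub, ?_⟩
  rw [interior_lens hr.ne']
  exact ⟨hi, hy.2⟩

lemma isConvexBody.volume_interior (hK : isConvexBody K) : volume (interior K) = volume K :=
  measure_congr (interior_ae_eq_of_null_frontier (hK.2.1.addHaar_frontier volume))

lemma volume_le_volume_shiftChords (hu : ‖u‖ = 1) (φ : ℝ → ℝ) (hK : isConvexBody K) :
    volume K ≤ volume (shiftChords u φ K) := by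
  rw [← hK.volume_interior]
  refine measure_le_of_forall_volume_line_le (f := innerSL ℝ u) (u := u)
    (by simp [hu]) isOpen_interior.measurableSet isOpen_shiftChords.measurableSet fun p hp => ?_
  have hconvex : Convex ℝ {s : ℝ | p + s • u ∈ interior K} :=
    (hK.2.1.interior.translate_preimage_right p).linear_preimage (LinearMap.toSpanSingleton ℝ _ u)
  have hbounded : Bornology.IsBounded {s : ℝ | p + s • u ∈ interior K} :=
    (isometry_add_smul hu p).antilipschitz.isBounded_preimage
      (hK.1.isBounded.subset interior_subset)
  refine volume_le_of_forall_closedBall_subset hconvex.isPreconnected hbounded φ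
    fun m r hr hchord s hs => ?_
  obtain ⟨ρ, hρ, hlens⟩ := exists_lens_subset hu isOpen_interior hchord
  exact ⟨p, m, r, ρ, by rwa [real_inner_comm], hr, hρ, hlens.trans interior_subset,
    add_smul_mem_interior_lens hu hρ hs⟩

end ShiftChords

section AssociatedContraction

variable {D : Set (Euc n) → Set (Euc n)} {φ : ℝ → ℝ} {K L : Set (Euc n)}

lemma inJH.ae_le (hD : inJH u D) (hK : isConvexBody K) (hL : isConvexBody L)
    (h : K ≤ᵐ[volume] L) : D K ≤ᵐ[volume] D L :=
  essSub_iff_ae_le.1 (hD.2.1 K L hK hL (essSub_iff_ae_le.2 h))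

lemma assocContr.ae_eq (hφ : assocContr u D φ) {x : Euc n} (hx : ⟪x, u⟫ = 0) (t : ℝ) {r : ℝ}
    (hr : 0 < r) : D (closedBall (x + t • u) r) =ᵐ[volume] closedBall (x + φ t • u) r :=
  essEq_iff_ae_eq.1 (hφ.2 x hx t r hr)

lemma lens_ae_le (hu : ‖u‖ = 1) (hD : inJH u D) (hφ : assocContr u D φ) {p : Euc n}
    (hp : ⟪p, u⟫ = 0) (m : ℝ) {r ρ : ℝ} (hr : 0 < r) (hρ : 0 < ρ) :
    lens u p (φ m) r ρ ≤ᵐ[volume] D (lens u p m r ρ) := by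
  have hlens : isConvexBody (lens u p m r ρ) := isConvexBody_lens hu hr hρ
  have hball : D (lens u p m r ρ) ≤ᵐ[volume] closedBall (p + φ m • u) r :=
    (hD.ae_le hlens (isConvexBody_closedBall _ hr) Set.inter_subset_left.eventuallyLE).trans
      (hφ.ae_eq hp m hr).le
  have hcyl : D (lens u p m r ρ) ≤ᵐ[volume] cyl u p ρ :=
    essSub_iff_ae_le.1 (hD.2.2.2.2 _ hlens p ρ hρ
      (essSub_iff_ae_le.2 Set.inter_subset_right.eventuallyLE))
  have hsub : D (lens u p m r ρ) ≤ᵐ[volume] lens u p (φ m) r ρ := by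
    filter_upwards [hball, hcyl] with y hy₁ hy₂ hy using ⟨hy₁ hy, hy₂ hy⟩
  refine (ae_eq_of_ae_subset_of_measure_ge hsub ?_ (hD.1 _ hlens).1.nullMeasurableSet ?_).symm.le
  · rw [hD.2.2.1 _ hlens, volume_lens_eq hu p (φ m) m]
  · exact (isConvexBody_lens hu hr hρ).1.measure_ne_top

lemma shiftChords_ae_le (hu : ‖u‖ = 1) (hD : inJH u D) (hφ : assocContr u D φ)
    (hK : isConvexBody K) : shiftChords u φ K ≤ᵐ[volume] D K := by
  refine ae_le_set.2 (measure_null_of_locally_null _ ?_)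
  rintro y ⟨⟨p, m, r, ρ, hp, hr, hρ, hsub, hy⟩, -⟩
  have hlens : lens u p (φ m) r ρ ≤ᵐ[volume] D K :=
    (lens_ae_le hu hD hφ hp m hr hρ).trans
      (hD.ae_le (isConvexBody_lens hu hr hρ) hK hsub.eventuallyLE)
  refine ⟨lens u p (φ m) r ρ \ D K, ?_, ae_le_set.1 hlens⟩
  filter_upwards [mem_nhdsWithin_of_mem_nhds (mem_interior_iff_mem_nhds.1 hy),
    self_mem_nhdsWithin] with z hz hzD using ⟨hz, hzD.2⟩

theorem ae_eq_shiftChords (hu : ‖u‖ = 1) (hD : inJH u D) (hφ : assocContr u D φ)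
    (hK : isConvexBody K) : D K =ᵐ[volume] shiftChords u φ K := by
  refine (ae_eq_of_ae_subset_of_measure_ge (shiftChords_ae_le hu hD hφ hK) ?_
    isOpen_shiftChords.measurableSet.nullMeasurableSet (hD.1 K hK).2).symm
  rw [hD.2.2.1 K hK]
  exact volume_le_volume_shiftChords hu φ hK

lemma volume_shiftChords (hu : ‖u‖ = 1) (hD : inJH u D) (hφ : assocContr u D φ)
    (hK : isConvexBody K) : volume (shiftChords u φ K) = volume K := by
  rw [← measure_congr (ae_eq_shiftChords hu hD hφ hK), hD.2.2.1 K hK]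

end AssociatedContraction

section Limits

variable {Dk : ℕ → Set (Euc n) → Set (Euc n)} {D : Set (Euc n) → Set (Euc n)}
  {φk : ℕ → ℝ → ℝ} {φ : ℝ → ℝ} {K L : Set (Euc n)}

theorem tendsto_contraction_of_convOnK (hu : ‖u‖ = 1)
    (hk : ∀ k, assocContr u (Dk k) (φk k)) (hφ : assocContr u D φ) (hconv : convOnK Dk D) (t : ℝ) :
    Tendsto (fun k => φk k t) atTop (𝓝 (φ t)) := by
  have hballs : Tendsto (fun k => volume
      (closedBall (0 + φk k t • u) 1 ∆ closedBall (0 + φ t • u) 1)) atTop (𝓝 0) := by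
    refine (hconv _ (isConvexBody_closedBall (0 + t • u) one_pos)).congr fun k => ?_
    exact measure_congr (((hk k).ae_eq (inner_zero_left u) t one_pos).symmDiff
      (hφ.ae_eq (inner_zero_left u) t one_pos))
  exact (isometry_add_smul hu 0).isEmbedding.tendsto_nhds_iff.2
    (tendsto_of_tendsto_measure_symmDiff_closedBall one_pos hballs)

lemma volume_shiftChords_of_tendsto (hu : ‖u‖ = 1) (hDk : ∀ k, inJH u (Dk k))
    (hk : ∀ k, assocContr u (Dk k) (φk k)) (hlim : ∀ t, Tendsto (fun k => φk k t) atTop (𝓝 (φ t)))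
    (hK : isConvexBody K) : volume (shiftChords u φ K) = volume K := by
  refine le_antisymm ?_ (volume_le_volume_shiftChords hu φ hK)
  exact measure_le_of_forall_eventually_mem isOpen_shiftChords.measurableSet
    (fun _ => isOpen_shiftChords.measurableSet)
    (fun k => (volume_shiftChords hu (hDk k) (hk k) hK).le)
    fun _ hy => eventually_mem_shiftChords hlim hy

theorem convOnK_shiftChords (hu : ‖u‖ = 1) (hDk : ∀ k, inJH u (Dk k))
    (hk : ∀ k, assocContr u (Dk k) (φk k))
    (hlim : ∀ t, Tendsto (fun k => φk k t) atTop (𝓝 (φ t))) :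
    convOnK Dk (shiftChords u φ) := by
  intro K hK
  have hvol : volume (shiftChords u φ K) = volume K :=
    volume_shiftChords_of_tendsto hu hDk hk hlim hK
  have hlimK : Tendsto (fun k => volume (shiftChords u (φk k) K ∆ shiftChords u φ K)) atTop (𝓝 0) :=
    tendsto_measure_symmDiff_of_forall_eventually_mem isOpen_shiftChords.measurableSet
      (fun _ => isOpen_shiftChords.measurableSet) (hvol ▸ hK.1.measure_ne_top)
      (fun k => (volume_shiftChords hu (hDk k) (hk k) hK).trans_le hvol.ge)
      fun _ hy => eventually_mem_shiftChords hlim hy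
  exact hlimK.congr fun k => measure_congr
    ((ae_eq_shiftChords hu (hDk k) (hk k) hK).symm.symmDiff (ae_eq_refl _))

theorem assocContr_of_convOnK (hk : ∀ k, assocContr u (Dk k) (φk k))
    (hlim : ∀ t, Tendsto (fun k => φk k t) atTop (𝓝 (φ t))) (hconv : convOnK Dk D) :
    assocContr u D φ := by
  refine ⟨LipschitzWith.of_dist_le_mul fun s t =>
    le_of_tendsto' ((hlim s).dist (hlim t)) fun k => (hk k).1.dist_le_mul s t,
    fun x hx t r hr => essEq_iff_ae_eq.2 ?_⟩
  have hvalues := hconv _ (isConvexBody_closedBall (x + t • u) hr)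
  have hballs := tendsto_measure_symmDiff_closedBall (μ := volume) hr.ne'
    (((hlim t).smul_const u).const_add x)
  have heq (k : ℕ) := (hk k).ae_eq hx t hr
  exact (ae_le_of_tendsto_measure_symmDiff hvalues hballs fun k => (heq k).le).antisymm
    (ae_le_of_tendsto_measure_symmDiff hballs hvalues fun k => (heq k).symm.le)

lemma ae_le_of_convOnK (hDk : ∀ k, inJH u (Dk k)) (hconv : convOnK Dk D) (hK : isConvexBody K)
    (hL : isConvexBody L) (h : K ≤ᵐ[volume] L) : D K ≤ᵐ[volume] D L :=
  ae_le_of_tendsto_measure_symmDiff (hconv K hK) (hconv L hL) fun k => (hDk k).ae_le hK hL h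

lemma ae_le_cyl_of_convOnK (hDk : ∀ k, inJH u (Dk k)) (hconv : convOnK Dk D) (hK : isConvexBody K)
    {c : Euc n} {ρ : ℝ} (hρ : 0 < ρ) (h : essSub K (cyl u c ρ)) : D K ≤ᵐ[volume] cyl u c ρ :=
  ae_le_of_tendsto_measure_symmDiff (Bs := fun _ => cyl u c ρ) (hconv K hK) (by simp)
    fun k => essSub_iff_ae_le.1 ((hDk k).2.2.2.2 K hK c ρ hρ h)

theorem inJH_shiftChords (hu : ‖u‖ = 1) (hDk : ∀ k, inJH u (Dk k))
    (hk : ∀ k, assocContr u (Dk k) (φk k))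
    (hlim : ∀ t, Tendsto (fun k => φk k t) atTop (𝓝 (φ t))) : inJH u (shiftChords u φ) := by
  have hconv : convOnK Dk (shiftChords u φ) := convOnK_shiftChords hu hDk hk hlim
  have hvol {K : Set (Euc n)} (hK : isConvexBody K) : volume (shiftChords u φ K) = volume K :=
    volume_shiftChords_of_tendsto hu hDk hk hlim hK
  refine ⟨fun K hK => ⟨isOpen_shiftChords.measurableSet, hvol hK ▸ hK.1.measure_ne_top⟩,
    fun K L hK hL h => ?_, fun K => hvol, fun K hK ⟨x, r, hr, hx⟩ => ?_,
    fun K hK c ρ hρ h => essSub_iff_ae_le.2 (ae_le_cyl_of_convOnK hDk hconv hK hρ h)⟩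
  · exact essSub_iff_ae_le.2 (ae_le_of_convOnK hDk hconv hK hL (essSub_iff_ae_le.1 h))
  · obtain ⟨p, t, hp, rfl⟩ := exists_eq_add_smul hu x
    have hball : isConvexBody (closedBall (p + t • u) r) := isConvexBody_closedBall _ hr
    have hKball := essEq_iff_ae_eq.1 hx
    refine ⟨p + φ t • u, r, hr, essEq_iff_ae_eq.2 ?_⟩
    exact ((ae_le_of_convOnK hDk hconv hK hball hKball.le).antisymm
      (ae_le_of_convOnK hDk hconv hball hK hKball.symm.le)).trans
      ((assocContr_of_convOnK hk hlim hconv).ae_eq hp t hr)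

end Limits

theorem stmt7_general (hu : ‖u‖ = 1) {Dk : ℕ → Set (Euc n) → Set (Euc n)} {φk : ℕ → ℝ → ℝ}
    (hk : ∀ k, assocContr u (Dk k) (φk k)) :
    (∀ D₀ φ₀, assocContr u D₀ φ₀ → convOnK Dk D₀ →
      ∀ t, Tendsto (fun k => φk k t) atTop (𝓝 (φ₀ t))) ∧
    ((∀ k, inJH u (Dk k)) → ∀ φ : ℝ → ℝ, (∀ t, Tendsto (fun k => φk k t) atTop (𝓝 (φ t))) →
      ∃ D, inJH u D ∧ assocContr u D φ ∧ convOnK Dk D ∧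
        ∀ D', inJH u D' → assocContr u D' φ → ∀ K, isConvexBody K → essEq (D' K) (D K)) := by
  refine ⟨fun D₀ φ₀ h₀ hconv => tendsto_contraction_of_convOnK hu hk h₀ hconv,
    fun hDk φ hlim => ?_⟩
  have hconv : convOnK Dk (shiftChords u φ) := convOnK_shiftChords hu hDk hk hlim
  exact ⟨shiftChords u φ, inJH_shiftChords hu hDk hk hlim, assocContr_of_convOnK hk hlim hconv,
    hconv, fun D' hD' hφ K hK => essEq_iff_ae_eq.2 (ae_eq_shiftChords hu hD' hφ hK)⟩

end EuclideanSpace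

/-- Lemma 6.1: pointwise convergence of the associated contractions is equivalent to
`L¹` convergence of maps in `𝒥_H(𝒦ⁿₙ)`. -/
theorem stmt7 {n : ℕ} (hn : 2 ≤ n) (u : Euc n) (hu : ‖u‖ = 1) (t₀ : ℝ)
    (D0 : Set (Euc n) → Set (Euc n)) (Dk : ℕ → Set (Euc n) → Set (Euc n))
    (φ0 : ℝ → ℝ) (φk : ℕ → ℝ → ℝ)
    (hJH0 : inJH u D0) (hJHk : ∀ k, inJH u (Dk k))
    (h0 : assocContr u D0 φ0) (hk : ∀ k, assocContr u (Dk k) (φk k)) :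
    (convOnK Dk D0 → ∀ t : ℝ, Tendsto (fun k => φk k t) atTop (𝓝 (φ0 t))) ∧
    (∀ φ : ℝ → ℝ, (∀ t : ℝ, Tendsto (fun k => φk k t) atTop (𝓝 (φ t))) →
      ∃ D : Set (Euc n) → Set (Euc n), inJH u D ∧ assocContr u D φ ∧ convOnK Dk D ∧
        ∀ D' : Set (Euc n) → Set (Euc n), inJH u D' → assocContr u D' φ →
          convOnK Dk D' → ∀ K : Set (Euc n), isConvexBody K → essEq (D' K) (D K)) :=
  ⟨(stmt7_general hu hk).1 D0 φ0 h0, fun φ hlim =>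
    let ⟨D, hD, hφ, hconv, huniq⟩ := (stmt7_general hu hk).2 hJHk φ hlim
    ⟨D, hD, hφ, hconv, fun D' hD' hφ' _ => huniq D' hD' hφ'⟩⟩
end
end
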